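/- Let L be a symmetric positive semidefinite real n×n matrix such that 2I − L is also positive semidefinite (all eigenvalues of L lie in [0,2]), let P = I − L, and let E(H) = trace(Hᵀ L H). Then for every real n×d matrix X and every natural number l, the Dirichlet energy is non-increasing under propagation: E(P^l X) ≤ E(X). -/

import Mathlib

/-! The energy lost in one propagation step is itself an energy: for Hermitian `L`, the identity
`L - (1 - L) * L * (1 - L) = L * (2 - L) * L` gives `E_L(X) - E_L((1 - L) X) = E_{2 - L}(L X)`,
which is nonnegative when `2 - L` is positive semidefinite. -/

open Matrix BigOperators

theorem sub_one_sub_mul_mul_one_sub {A : Type*} [Ring A] (a : A) :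
    a - (1 - a) * a * (1 - a) = a * (2 - a) * a := by
  noncomm_ring

section DirichletEnergy

variable {k m n R : Type*} [Fintype k] [Fintype m] [Fintype n]

/-- The Dirichlet energy `E(X) = trace (Xᴴ L X)` of a feature matrix `X` with respect to `L`.
It is encoded with the conjugate transpose, so that it makes sense over any star ring;
over `ℝ` this is the transpose. -/
def dirichletEnergy [NonUnitalSemiring R] [Star R] (L : Matrix n n R) (X : Matrix n m R) : R :=
  (Xᴴ * L * X).trace

theorem dirichletEnergy_mul [NonUnitalSemiring R] [StarRing R] (L : Matrix n n R)
    (A : Matrix n k R) (X : Matrix k m R) :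
    dirichletEnergy L (A * X) = dirichletEnergy (Aᴴ * L * A) X := by
  simp only [dirichletEnergy, conjTranspose_mul, Matrix.mul_assoc]

theorem dirichletEnergy_sub_left [NonUnitalRing R] [Star R] (L K : Matrix n n R)
    (X : Matrix n m R) :
    dirichletEnergy (L - K) X = dirichletEnergy L X - dirichletEnergy K X := by
  simp only [dirichletEnergy, Matrix.mul_sub, Matrix.sub_mul, trace_sub]

theorem dirichletEnergy_sub_dirichletEnergy_one_sub_mul [DecidableEq n] [Ring R] [StarRing R]
    {L : Matrix n n R} (hL : L.IsHermitian) (X : Matrix n m R) :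
    dirichletEnergy L X - dirichletEnergy L ((1 - L) * X) = dirichletEnergy (2 - L) (L * X) := by
  rw [dirichletEnergy_mul, dirichletEnergy_mul, (isHermitian_one.sub hL).eq, hL.eq,
    ← dirichletEnergy_sub_left, sub_one_sub_mul_mul_one_sub]

variable [Ring R] [PartialOrder R] [IsOrderedAddMonoid R] [StarRing R] {L : Matrix n n R}

theorem dirichletEnergy_nonneg (hL : L.PosSemidef) (X : Matrix n m R) :
    0 ≤ dirichletEnergy L X :=
  (hL.conjTranspose_mul_mul_same X).trace_nonneg

variable [DecidableEq n]

theorem dirichletEnergy_one_sub_mul_le (h2L : (2 - L).PosSemidef) (X : Matrix n m R) :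
    dirichletEnergy L ((1 - L) * X) ≤ dirichletEnergy L X := by
  have h2 : (2 : Matrix n n R).IsHermitian := IsSelfAdjoint.ofNat 2
  have hL : L.IsHermitian := by simpa only [sub_sub_cancel] using h2.sub h2L.isHermitian
  rw [← sub_nonneg, dirichletEnergy_sub_dirichletEnergy_one_sub_mul hL]
  exact dirichletEnergy_nonneg h2L (L * X)

theorem energy_propagated_nonincreasing_general (h2L : (2 - L).PosSemidef) (X : Matrix n m R) :
    Antitone fun l : ℕ ↦ dirichletEnergy L ((1 - L) ^ l * X) := by
  refine antitone_nat_of_succ_le fun l ↦ ?_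
  rw [pow_succ', Matrix.mul_assoc]
  exact dirichletEnergy_one_sub_mul_le h2L ((1 - L) ^ l * X)

end DirichletEnergy

/-- The Dirichlet energy is non-increasing under propagation: `E(P^l X) ≤ E(X)`
when `L` and `2I − L` are PSD and `P = I − L`. -/
theorem energy_propagated_nonincreasing (n d : ℕ) (L : Matrix (Fin n) (Fin n) ℝ)
    (hL : L.PosSemidef)
    (h2L : ((2 : ℝ) • (1 : Matrix (Fin n) (Fin n) ℝ) - L).PosSemidef)
    (P : Matrix (Fin n) (Fin n) ℝ) (hP : P = 1 - L)
    (X : Matrix (Fin n) (Fin d) ℝ) (l : ℕ) :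
    ((P ^ l * X)ᵀ * L * (P ^ l * X)).trace ≤ (Xᵀ * L * X).trace := by
  rw [two_smul, one_add_one_eq_two] at h2L
  simpa [dirichletEnergy, hP] using energy_propagated_nonincreasing_general h2L X l.zero_le
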